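/- arXiv:1403.3929 — 2 statements merged into one kernel-verified Lean document; each statement's English description precedes it below -/
import Mathlib

section
/- Let R be a principal ideal domain and let (D₁, D₂, D₃, D₄) ∈ R⁴ be a row vector with D₄ ≠ 0. Then there exists an element s of the Shalika subgroup R(R) ⊆ GL₄(R) — i.e., a matrix s = ((I₂, M),(0, I₂))·((g, 0),(0, g)) with M ∈ M₂(R) and g ∈ GL₂(R) — such that the row vector (D₁, D₂, D₃, D₄)·s has third coordinate equal to 0 and fourth coordinate nonzero. -/
/-!
Take `M = 0`, so that only the last two coordinates `(c, d) = (D₃, D₄)` matter and they are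
multiplied by `g`. Since `d ≠ 0`, `e = gcd(c, d)` is nonzero; write `c = e c'`, `d = e d'`,
`c' a + d' b = 1` (`exists_bezout_cofactors`). Then `g = !![d', a; -c', b]` has determinant `1`
and `(c, d) g = (0, e)`.
-/

open Matrix

/-- The Bezout data `c = e c'`, `d = e d'`, `e = c a + d b` for `e = gcd(c, d)`, with `e`
eliminated. -/
lemma exists_bezout_cofactors {R : Type*} [CommRing R] [IsDomain R] [IsPrincipalIdealRing R]
    (c : R) {d : R} (hd : d ≠ 0) :
    ∃ c' d' a b : R, c * d' = d * c' ∧ c' * a + d' * b = 1 ∧ c * a + d * b ≠ 0 := by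
  obtain ⟨a, b, hab⟩ := IsBezout.gcd_eq_sum c d
  obtain ⟨c', hc'⟩ := IsBezout.gcd_dvd_left c d
  obtain ⟨d', hd'⟩ := IsBezout.gcd_dvd_right c d
  generalize IsBezout.gcd c d = e at hab hc' hd'
  have he : e ≠ 0 := by
    rintro rfl
    exact hd (by rw [hd', zero_mul])
  refine ⟨c', d', a, b, ?_, mul_left_cancel₀ he ?_, ?_⟩
  · linear_combination d' * hc' - c' * hd'
  · linear_combination hab - a * hc' - b * hd'
  · rwa [show c * a + d * b = e by linear_combination hab]

lemma vecMul_fromBlocks_diag {R : Type*} [CommRing R] (D : Fin 4 → R)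
    (A : Matrix (Fin 2) (Fin 2) R) :
    Matrix.vecMul D (Matrix.reindex finSumFinEquiv finSumFinEquiv
      (Matrix.fromBlocks A 0 0 A)) 2 = D 2 * A 0 0 + D 3 * A 1 0 ∧
    Matrix.vecMul D (Matrix.reindex finSumFinEquiv finSumFinEquiv
      (Matrix.fromBlocks A 0 0 A)) 3 = D 2 * A 0 1 + D 3 * A 1 1 := by
  have h0 : (finSumFinEquiv (m := 2) (n := 2)).symm (0 : Fin 4) = Sum.inl 0 := rfl
  have h1 : (finSumFinEquiv (m := 2) (n := 2)).symm (1 : Fin 4) = Sum.inl 1 := rfl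
  have h2 : (finSumFinEquiv (m := 2) (n := 2)).symm (2 : Fin 4) = Sum.inr 0 := rfl
  have h3 : (finSumFinEquiv (m := 2) (n := 2)).symm (3 : Fin 4) = Sum.inr 1 := rfl
  constructor <;>
    simp [Matrix.vecMul, dotProduct, Fin.sum_univ_four, h0, h1, h2, h3]

/-- Over a PID `R`, for any row vector `(D₁, D₂, D₃, D₄)` with `D₄ ≠ 0`
there is an element `s = ((I₂, M),(0, I₂))·((g, 0),(0, g))` of the Shalika subgroup of
`GL₄(R)` such that `(D₁, D₂, D₃, D₄)·s` has third coordinate `0` and fourth coordinate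
nonzero. -/
theorem shalika_action_on_bottom_row
    (R : Type*) [CommRing R] [IsDomain R] [IsPrincipalIdealRing R]
    (D : Fin 4 → R) (hD : D 3 ≠ 0) :
    ∃ (M : Matrix (Fin 2) (Fin 2) R) (g : GL (Fin 2) R),
      Matrix.vecMul D
        (Matrix.reindex finSumFinEquiv finSumFinEquiv
          (Matrix.fromBlocks 1 M 0 1 *
            Matrix.fromBlocks (g : Matrix (Fin 2) (Fin 2) R) 0 0
              (g : Matrix (Fin 2) (Fin 2) R))) 2 = 0 ∧
      Matrix.vecMul D
        (Matrix.reindex finSumFinEquiv finSumFinEquiv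
          (Matrix.fromBlocks 1 M 0 1 *
            Matrix.fromBlocks (g : Matrix (Fin 2) (Fin 2) R) 0 0
              (g : Matrix (Fin 2) (Fin 2) R))) 3 ≠ 0 := by
  obtain ⟨c', d', a, b, hcross, hbez, hne⟩ := exists_bezout_cofactors (D 2) hD
  have hdet : (!![d', a; -c', b] : Matrix (Fin 2) (Fin 2) R).det = 1 := by
    rw [Matrix.det_fin_two_of, ← hbez]; ring
  have hunit : IsUnit (!![d', a; -c', b] : Matrix (Fin 2) (Fin 2) R) :=
    (Matrix.isUnit_iff_isUnit_det _).2 (hdet ▸ isUnit_one)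
  obtain ⟨g, hg⟩ := hunit
  refine ⟨0, g, ?_⟩
  rw [Matrix.fromBlocks_one, one_mul, (vecMul_fromBlocks_diag D _).1,
    (vecMul_fromBlocks_diag D _).2, hg]
  refine ⟨?_, ?_⟩
  · simp only [Matrix.of_apply, Matrix.cons_val', Matrix.cons_val_zero, Matrix.cons_val_one,
      Matrix.cons_val_fin_one]
    linear_combination hcross
  · simpa using hne
end

section
/- Let R be a principal ideal domain and let D₁, D₂, D₄ ∈ R with D₄ ≠ 0 and with the ideal generated by D₁, D₂, D₄ equal to R. Then there exist d₁, d₂, c₂ ∈ R such that D₄ = d₁d₂, D₁ = c₂d₁, c₂ and d₂ are coprime (they generate the unit ideal), and D₂ and d₁ are coprime (they generate the unit ideal). -/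
/-- In a PID, if `D₄ ≠ 0` and `(D₁, D₂, D₄) = R`, then one can write
`D₄ = d₁d₂`, `D₁ = c₂d₁` with `c₂, d₂` coprime and `D₂, d₁` coprime. -/
theorem bottom_row_factorization
    (R : Type*) [CommRing R] [IsDomain R] [IsPrincipalIdealRing R]
    (D₁ D₂ D₄ : R) (h4 : D₄ ≠ 0)
    (hgcd : Ideal.span ({D₁, D₂, D₄} : Set R) = ⊤) :
    ∃ d₁ d₂ c₂ : R,
      D₄ = d₁ * d₂ ∧ D₁ = c₂ * d₁ ∧
      Ideal.span ({c₂, d₂} : Set R) = ⊤ ∧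
      Ideal.span ({D₂, d₁} : Set R) = ⊤ := by
  -- `d₁ = g` is a gcd of `D₁` and `D₄`; dividing its Bézout relation by `g` makes the
  -- cofactors coprime, and `(D₂, g) = (D₁, D₂, D₄) = R`.
  obtain ⟨g, hg⟩ := IsPrincipalIdealRing.principal (Ideal.span ({D₁, D₄} : Set R))
  replace hg : Ideal.span ({D₁, D₄} : Set R) = Ideal.span {g} := hg
  have h1 : D₁ ∈ Ideal.span ({g} : Set R) := hg ▸ Ideal.subset_span (by simp)
  have h2 : D₄ ∈ Ideal.span ({g} : Set R) := hg ▸ Ideal.subset_span (by simp)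
  obtain ⟨c, hc⟩ := Ideal.mem_span_singleton'.1 h1
  obtain ⟨d, hd⟩ := Ideal.mem_span_singleton'.1 h2
  have h3 : g ∈ Ideal.span ({D₁, D₄} : Set R) := hg ▸ Ideal.mem_span_singleton_self g
  obtain ⟨x, y, hxy⟩ := Ideal.mem_span_pair.1 h3
  have hg0 : g ≠ 0 := by
    rintro rfl
    exact h4 (by simpa using hd.symm)
  refine ⟨g, d, c, by rw [← hd, mul_comm], hc.symm, ?_, ?_⟩
  · rw [Ideal.eq_top_iff_one, Ideal.mem_span_pair]
    refine ⟨x, y, mul_right_cancel₀ hg0 ?_⟩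
    linear_combination hxy + x * hc + y * hd
  · rw [← hgcd, Set.insert_comm D₁ D₂, Ideal.span_insert, Ideal.span_insert, hg]
end
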